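/- arXiv:2604.02063 — 2 statements merged into one kernel-verified Lean document; each statement's English description precedes it below -/
import Mathlib

section
/- Let R be a finite nontrivial commutative local principal ideal ring. Let 𝓕 = {F_i}_{i ∈ I} and 𝓖 = {G_j}_{j ∈ J} be families of affine permutations of R such that every F_i commutes with every G_j. If there exist indices r, s ∈ I such that F_r and F_s do not commute, then the family 𝓖 is pairwise commuting: G_j ∘ G_{j′} = G_{j′} ∘ G_j for all j, j′ ∈ J. -/
/-- Two self-maps of a type commute under composition. -/
def MapsCommute {α : Type*} (f g : α → α) : Prop :=
  f ∘ g = g ∘ f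

/-- `f : R → R` is an affine permutation: `x ↦ a·x + b` with `a` a unit of `R`. -/
def IsAffinePerm {R : Type*} [CommRing R] (f : R → R) : Prop :=
  ∃ a : Rˣ, ∃ b : R, ∀ x, f x = (a : R) * x + b

/-- Divisibility is total in a local principal ideal ring. -/
theorem flo_dvd_total {R : Type*} [CommRing R] [IsLocalRing R] [IsPrincipalIdealRing R]
    (a b : R) : a ∣ b ∨ b ∣ a := by
  obtain ⟨c, hc⟩ := (IsPrincipalIdealRing.principal (Ideal.span {a, b})).principal
  have ha : a ∈ Ideal.span {a, b} := Ideal.subset_span (by simp)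
  have hb : b ∈ Ideal.span {a, b} := Ideal.subset_span (by simp)
  have hcm : c ∈ Ideal.span {a, b} := by
    rw [hc]; exact Submodule.mem_span_singleton_self c
  rw [hc] at ha hb
  obtain ⟨x, rfl⟩ := Submodule.mem_span_singleton.1 ha
  obtain ⟨y, rfl⟩ := Submodule.mem_span_singleton.1 hb
  obtain ⟨s, t, hst⟩ := Ideal.mem_span_pair.1 hcm
  simp only [smul_eq_mul] at *
  have key : c * (1 - (s * x + t * y)) = 0 := by linear_combination -hst
  rcases IsLocalRing.isUnit_or_isUnit_one_sub_self (s * x + t * y) with h | h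
  · rcases IsLocalRing.isUnit_or_isUnit_of_isUnit_add h with h | h
    · left
      have hx : IsUnit x := isUnit_of_mul_isUnit_right h
      exact mul_dvd_mul hx.dvd dvd_rfl |>.trans (by rfl)
    · right
      have hx : IsUnit y := isUnit_of_mul_isUnit_right h
      exact mul_dvd_mul hx.dvd dvd_rfl |>.trans (by rfl)
  · have hc0 : c = 0 := (h.mul_left_eq_zero).1 key
    left
    simp [hc0]

/-- A nonempty finite list has an element dividing all the others. -/
theorem flo_exists_min {R : Type*} [CommRing R] [IsLocalRing R] [IsPrincipalIdealRing R]
    (a : R) (l : List R) : ∃ m ∈ a :: l, ∀ x ∈ a :: l, m ∣ x := by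
  induction l generalizing a with
  | nil => exact ⟨a, by simp, by simp⟩
  | cons b l ih =>
    obtain ⟨m, hm, hd⟩ := ih b
    rcases flo_dvd_total a m with h | h
    · refine ⟨a, by simp, fun x hx => ?_⟩
      rcases List.mem_cons.1 hx with rfl | hx
      · exact dvd_rfl
      · exact h.trans (hd x hx)
    · refine ⟨m, List.mem_cons_of_mem _ hm, fun x hx => ?_⟩
      rcases List.mem_cons.1 hx with rfl | hx
      · exact h
      · exact hd x hx

theorem flo_core {R : Type*} [CommRing R] {u b p q p' q' : R}
    (h : u * q = b * p) (h' : u * q' = b * p') (hb : u ∣ b) (hp : u ∣ p) (hp' : u ∣ p') :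
    p * q' = p' * q := by
  obtain ⟨t, rfl⟩ := hb
  obtain ⟨x, rfl⟩ := hp
  obtain ⟨y, rfl⟩ := hp'
  linear_combination x * h' - y * h

theorem flo_comm_iff {R : Type*} [CommRing R] {f g : R → R} {a b c d : R}
    (hf : ∀ x, f x = a * x + b) (hg : ∀ x, g x = c * x + d) :
    MapsCommute f g ↔ (a - 1) * d = b * (c - 1) := by
  unfold MapsCommute
  constructor
  · intro h
    have := congrFun h 0
    simp only [Function.comp, hf, hg] at this
    linear_combination this
  · intro h
    funext x
    simp only [Function.comp, hf, hg]
    linear_combination h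

/-- **Family version of the local obstruction.** Over a finite nontrivial commutative
local principal ideal ring `R`, if `𝓕 = {F i}` and `𝓖 = {G j}` are families of affine
permutations such that every `F i` commutes with every `G j`, and `𝓕` contains a
noncommuting pair, then `𝓖` is pairwise commuting. -/
theorem family_local_obstruction {R : Type*} [CommRing R] [Finite R] [Nontrivial R]
    [IsLocalRing R] [IsPrincipalIdealRing R]
    {I J : Type*} (F : I → R → R) (G : J → R → R)
    (hF : ∀ i, IsAffinePerm (F i)) (hG : ∀ j, IsAffinePerm (G j))
    (hcross : ∀ i j, MapsCommute (F i) (G j))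
    (r s : I) (hrs : ¬ MapsCommute (F r) (F s)) :
    ∀ j j', MapsCommute (G j) (G j') := by
  intro j j'
  obtain ⟨a₁, b₁, h₁⟩ := hF r
  obtain ⟨a₂, b₂, h₂⟩ := hF s
  obtain ⟨c, q, hj⟩ := hG j
  obtain ⟨c', q', hj'⟩ := hG j'
  have e₁ := (flo_comm_iff h₁ hj).1 (hcross r j)
  have e₁' := (flo_comm_iff h₁ hj').1 (hcross r j')
  have e₂ := (flo_comm_iff h₂ hj).1 (hcross s j)
  have e₂' := (flo_comm_iff h₂ hj').1 (hcross s j')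
  rw [flo_comm_iff h₁ h₂] at hrs
  rw [flo_comm_iff hj hj']
  generalize (a₁ : R) - 1 = u₁ at *
  generalize (a₂ : R) - 1 = u₂ at *
  generalize (c : R) - 1 = p at *
  generalize (c' : R) - 1 = p' at *
  obtain ⟨m, hm, hd⟩ := flo_exists_min u₁ [b₁, u₂, b₂, p, q, p', q']
  simp only [List.mem_cons, List.not_mem_nil, or_false, forall_eq_or_imp, forall_eq] at hm hd
  obtain ⟨d1, d2, d3, d4, d5, d6, d7, d8⟩ := hd
  rcases hm with rfl | rfl | rfl | rfl | rfl | rfl | rfl | rfl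
  · linear_combination flo_core e₁ e₁' d2 d5 d7
  · linear_combination -flo_core e₁.symm e₁'.symm d1 d6 d8
  · linear_combination flo_core e₂ e₂' d4 d5 d7
  · linear_combination -flo_core e₂.symm e₂'.symm d3 d6 d8
  · refine absurd ?_ hrs
    linear_combination flo_core (u := m) (b := q) (p := u₁) (q := b₁) (p' := u₂) (q' := b₂)
      (by linear_combination -e₁) (by linear_combination -e₂) d6 d1 d3
  · refine absurd ?_ hrs
    linear_combination -flo_core (u := m) (b := p) (p := b₁) (q := u₁) (p' := b₂) (q' := u₂)
      (by linear_combination e₁) (by linear_combination e₂) d5 d2 d4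
  · refine absurd ?_ hrs
    linear_combination flo_core (u := m) (b := q') (p := u₁) (q := b₁) (p' := u₂) (q' := b₂)
      (by linear_combination -e₁') (by linear_combination -e₂') d8 d1 d3
  · refine absurd ?_ hrs
    linear_combination -flo_core (u := m) (b := p') (p := b₁) (q := u₁) (p' := b₂) (q' := u₂)
      (by linear_combination e₁') (by linear_combination e₂') d7 d2 d4
end

section
/- Let n ≥ 2 be an integer. Then the group of affine permutations of the ring ℤ/nℤ contains a cross-commuting nonabelian square if and only if there exist two distinct primes p and q dividing n such that p^{v_p(n)} > 2 and q^{v_q(n)} > 2, where v_p(n) denotes the exponent of p in the prime factorization of n (i.e., at least two of the prime-power factors in the factorization of n exceed 2). -/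
/-- A cross-commuting nonabelian square exists in the affine permutation group of `R`. -/
def HasCrossCommutingNonabelianSquare (R : Type*) [CommRing R] : Prop :=
  ∃ F₀ F₁ G₀ G₁ : R → R,
    IsAffinePerm F₀ ∧ IsAffinePerm F₁ ∧ IsAffinePerm G₀ ∧ IsAffinePerm G₁ ∧
    MapsCommute F₀ G₀ ∧ MapsCommute F₀ G₁ ∧ MapsCommute F₁ G₀ ∧ MapsCommute F₁ G₁ ∧
    ¬ MapsCommute F₀ F₁ ∧ ¬ MapsCommute G₀ G₁

theorem aux_det {R : Type*} [CommRing R] {u b w0 d0 w1 d1 t : R} (ht : t = u ∨ t = b)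
    (hu : t ∣ u) (hb : t ∣ b) (hw0 : t ∣ w0) (hd0 : t ∣ d0) (hw1 : t ∣ w1) (hd1 : t ∣ d1)
    (h0 : u * d0 = w0 * b) (h1 : u * d1 = w1 * b) : w0 * d1 = w1 * d0 := by
  obtain ⟨x0, rfl⟩ := hw0
  obtain ⟨x1, rfl⟩ := hw1
  obtain ⟨y0, rfl⟩ := hd0
  obtain ⟨y1, rfl⟩ := hd1
  rcases ht with rfl | rfl
  · obtain ⟨s, rfl⟩ := hb
    linear_combination x0 * h1 - x1 * h0
  · obtain ⟨s, rfl⟩ := hu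
    linear_combination y0 * h1 - y1 * h0

theorem aux_chain {R : Type*} [CommRing R] (tot : ∀ a b : R, a ∣ b ∨ b ∣ a)
    {u0 b0 u1 b1 w0 d0 w1 d1 : R}
    (h00 : u0 * d0 = w0 * b0) (h01 : u0 * d1 = w1 * b0)
    (h10 : u1 * d0 = w0 * b1) (h11 : u1 * d1 = w1 * b1) :
    u0 * b1 = u1 * b0 ∨ w0 * d1 = w1 * d0 := by
  have key : ∀ x y : R, ∃ t, (t = x ∨ t = y) ∧ t ∣ x ∧ t ∣ y := by
    intro x y
    rcases tot x y with h | h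
    · exact ⟨x, Or.inl rfl, dvd_rfl, h⟩
    · exact ⟨y, Or.inr rfl, h, dvd_rfl⟩
  obtain ⟨t0, e0, p0, q0⟩ := key u0 b0
  obtain ⟨t1, e1, p1, q1⟩ := key u1 b1
  obtain ⟨s0, f0, m0, n0⟩ := key w0 d0
  obtain ⟨s1, f1, m1, n1⟩ := key w1 d1
  obtain ⟨t, e, p, q⟩ := key t0 t1
  obtain ⟨s, f, m, n⟩ := key s0 s1
  rcases tot t s with h | h
  · right
    have k0 := h.trans m
    have k1 := h.trans n
    rcases e with rfl | rfl
    · exact aux_det e0 p0 q0 (k0.trans m0) (k0.trans n0) (k1.trans m1) (k1.trans n1) h00 h01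
    · exact aux_det e1 p1 q1 (k0.trans m0) (k0.trans n0) (k1.trans m1) (k1.trans n1) h10 h11
  · left
    have k0 := h.trans p
    have k1 := h.trans q
    rcases f with rfl | rfl
    · exact aux_det f0 m0 n0 (k0.trans p0) (k0.trans q0) (k1.trans p1) (k1.trans q1)
        h00.symm h10.symm
    · exact aux_det f1 m1 n1 (k0.trans p0) (k0.trans q0) (k1.trans p1) (k1.trans q1)
        h01.symm h11.symm

theorem aux_tot (p k : ℕ) (hp : p.Prime) (a b : ZMod (p ^ k)) : a ∣ b ∨ b ∣ a := by
  have := Fact.mk hp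
  obtain ⟨x, rfl⟩ := ZMod.ringHom_surjective (PadicInt.toZModPow (p := p) k) a
  obtain ⟨y, rfl⟩ := ZMod.ringHom_surjective (PadicInt.toZModPow (p := p) k) b
  rcases ValuationRing.dvd_total x y with h | h
  · exact Or.inl (map_dvd _ h)
  · exact Or.inr (map_dvd _ h)

theorem aux_comm {R : Type*} [CommRing R] {f g : R → R} {a b c d : R}
    (hf : ∀ x, f x = a * x + b) (hg : ∀ x, g x = c * x + d) :
    MapsCommute f g ↔ (a - 1) * d = (c - 1) * b := by
  unfold MapsCommute
  constructor
  · intro h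
    have := congrFun h 0
    simp only [Function.comp, hf, hg] at this
    linear_combination this
  · intro h
    funext x
    simp only [Function.comp, hf, hg]
    linear_combination h

theorem aux_local (n : ℕ) (hn : n ≠ 0) (x y : ZMod n) (h : x ≠ y) :
    ∃ p : ℕ, p.Prime ∧ ZMod.castHom (Nat.ordProj_dvd n p) (ZMod (p ^ n.factorization p)) x ≠
      ZMod.castHom (Nat.ordProj_dvd n p) (ZMod (p ^ n.factorization p)) y := by
  have : NeZero n := ⟨hn⟩
  by_contra! hc
  apply h
  rw [← sub_eq_zero]
  obtain ⟨m, hm⟩ := ZMod.natCast_zmod_surjective (x - y)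
  rw [← hm, ZMod.natCast_eq_zero_iff, Nat.dvd_iff_prime_pow_dvd_dvd]
  intro p k hp hk
  have h1 := sub_eq_zero.2 (hc p hp)
  rw [← map_sub, ← hm, map_natCast, ZMod.natCast_eq_zero_iff] at h1
  exact (pow_dvd_pow p ((hp.pow_dvd_iff_le_factorization hn).1 hk)).trans h1

theorem aux_small (m : ℕ) (hm0 : m ≠ 0) (hm : m ≤ 2) (a : (ZMod m)ˣ) : (a : ZMod m) = 1 := by
  have : m = 1 ∨ m = 2 := by omega
  rcases this with rfl | rfl
  · exact Subsingleton.elim _ _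
  · revert a; decide

theorem aux_idem (n p : ℕ) (hn : n ≠ 0) (hp : p.Prime) :
    ∃ e : ℤ, ((p ^ n.factorization p : ℕ) : ℤ) ∣ e - 1 ∧
      ((n / p ^ n.factorization p : ℕ) : ℤ) ∣ e := by
  have hc : Nat.Coprime (p ^ n.factorization p) (n / p ^ n.factorization p) :=
    (Nat.coprime_ordCompl hp hn).pow_left _
  obtain ⟨a, b, hab⟩ := Nat.isCoprime_iff_coprime.2 hc
  exact ⟨_, ⟨-a, by linear_combination hab⟩, ⟨b, mul_comm b _⟩⟩

theorem aux_idem2 (n p : ℕ) (e : ℤ) (hp : 2 < p ^ n.factorization p)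
    (h1 : ((p ^ n.factorization p : ℕ) : ℤ) ∣ e - 1)
    (h2 : ((n / p ^ n.factorization p : ℕ) : ℤ) ∣ e) :
    (e : ZMod n) * e = e ∧ 2 * (e : ZMod n) ≠ 0 := by
  constructor
  · have : ((n : ℕ) : ℤ) ∣ (e - 1) * e := by
      rw [← Nat.ordProj_mul_ordCompl_eq_self n p, Nat.cast_mul]
      exact mul_dvd_mul h1 h2
    rw [← ZMod.intCast_zmod_eq_zero_iff_dvd] at this
    push_cast at this
    linear_combination this
  · intro h
    have h3 : ((2 * e : ℤ) : ZMod n) = 0 := by push_cast; exact h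
    rw [ZMod.intCast_zmod_eq_zero_iff_dvd] at h3
    have h4 : ((p ^ n.factorization p : ℕ) : ℤ) ∣ 2 * e :=
      (Int.natCast_dvd_natCast.2 (Nat.ordProj_dvd n p)).trans h3
    have h5 : ((p ^ n.factorization p : ℕ) : ℤ) ∣ 2 := by
      have := dvd_sub h4 (h1.mul_left 2)
      ring_nf at this ⊢
      exact this
    have := Int.le_of_dvd (by norm_num) h5
    omega

/-- **Exact classification for residue rings (prime-power version).** For `n ≥ 2`, the
affine group of `ℤ/nℤ` contains a cross-commuting nonabelian square if and only if at
least two prime-power factors `p ^ v_p(n)` of `n` exceed `2`. -/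
theorem zmod_classification_factorization (n : ℕ) (hn : 2 ≤ n) :
    HasCrossCommutingNonabelianSquare (ZMod n) ↔
      ∃ p q : ℕ, p.Prime ∧ q.Prime ∧ p ≠ q ∧ p ∣ n ∧ q ∣ n ∧
        2 < p ^ (n.factorization p) ∧ 2 < q ^ (n.factorization q) := by
  have hn0 : n ≠ 0 := by omega
  constructor
  · rintro ⟨F0, F1, G0, G1, ⟨a0, b0, hF0⟩, ⟨a1, b1, hF1⟩, ⟨c0, d0, hG0⟩, ⟨c1, d1, hG1⟩,
      h00, h01, h10, h11, hF, hG⟩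
    rw [aux_comm hF0 hG0] at h00
    rw [aux_comm hF0 hG1] at h01
    rw [aux_comm hF1 hG0] at h10
    rw [aux_comm hF1 hG1] at h11
    rw [aux_comm hF0 hF1] at hF
    rw [aux_comm hG0 hG1] at hG
    have big : ∀ (p : ℕ) (a c : (ZMod n)ˣ) (b d : ZMod n), p.Prime →
        ZMod.castHom (Nat.ordProj_dvd n p) (ZMod (p ^ n.factorization p)) ((a - 1) * d) ≠
        ZMod.castHom (Nat.ordProj_dvd n p) (ZMod (p ^ n.factorization p)) ((c - 1) * b) →
        2 < p ^ n.factorization p := by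
      intro p a c b d hp h
      by_contra! hle
      apply h
      have hz : p ^ n.factorization p ≠ 0 := pow_ne_zero _ hp.ne_zero
      have key := fun a : (ZMod n)ˣ => aux_small _ hz hle
        (Units.map (ZMod.castHom (Nat.ordProj_dvd n p)
          (ZMod (p ^ n.factorization p))).toMonoidHom a)
      have key' : ∀ a : (ZMod n)ˣ, ZMod.castHom (Nat.ordProj_dvd n p)
          (ZMod (p ^ n.factorization p)) (a : ZMod n) = 1 := key
      rw [map_mul, map_mul, map_sub, map_sub, key', key', map_one, sub_self, zero_mul, zero_mul]
    have bigd : ∀ p : ℕ, 2 < p ^ n.factorization p → p ∣ n := by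
      intro p h
      apply Nat.dvd_of_factorization_pos
      intro h0
      rw [h0] at h
      simp at h
    obtain ⟨p, hp, hpF⟩ := aux_local n hn0 _ _ hF
    obtain ⟨q, hq, hqG⟩ := aux_local n hn0 _ _ hG
    have hp2 := big p _ _ _ _ hp hpF
    have hq2 := big q _ _ _ _ hq hqG
    refine ⟨p, q, hp, hq, ?_, bigd p hp2, bigd q hq2, hp2, hq2⟩
    rintro rfl
    have e00 := congrArg (ZMod.castHom (Nat.ordProj_dvd n p) (ZMod (p ^ n.factorization p))) h00
    have e01 := congrArg (ZMod.castHom (Nat.ordProj_dvd n p) (ZMod (p ^ n.factorization p))) h01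
    have e10 := congrArg (ZMod.castHom (Nat.ordProj_dvd n p) (ZMod (p ^ n.factorization p))) h10
    have e11 := congrArg (ZMod.castHom (Nat.ordProj_dvd n p) (ZMod (p ^ n.factorization p))) h11
    rw [map_mul, map_mul] at e00 e01 e10 e11 hpF hqG
    rcases aux_chain (aux_tot p _ hp) e00 e01 e10 e11 with h | h
    · exact hpF h
    · exact hqG h
  · rintro ⟨p, q, hp, hq, hpq, -, -, hp2, hq2⟩
    obtain ⟨e, he1, he2⟩ := aux_idem n p hn0 hp
    obtain ⟨f, hf1, hf2⟩ := aux_idem n q hn0 hq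
    obtain ⟨hee, he⟩ := aux_idem2 n p e hp2 he1 he2
    obtain ⟨hff, hf⟩ := aux_idem2 n q f hq2 hf1 hf2
    have hef : (e : ZMod n) * f = 0 := by
      have hd : p ^ n.factorization p ∣ n / q ^ n.factorization q := by
        have hc : Nat.Coprime (p ^ n.factorization p) (q ^ n.factorization q) :=
          Nat.Coprime.pow _ _ ((Nat.coprime_primes hp hq).2 hpq)
        apply hc.dvd_of_dvd_mul_left
        rw [Nat.ordProj_mul_ordCompl_eq_self]
        exact Nat.ordProj_dvd n p
      have : ((n : ℕ) : ℤ) ∣ f * e := by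
        rw [← Nat.ordProj_mul_ordCompl_eq_self n p, Nat.cast_mul]
        exact mul_dvd_mul ((Int.natCast_dvd_natCast.2 hd).trans hf2) he2
      rw [← ZMod.intCast_zmod_eq_zero_iff_dvd] at this
      push_cast at this
      linear_combination this
    generalize (e : ZMod n) = e at *
    generalize (f : ZMod n) = f at *
    have hE : (1 - 2 * e) * (1 - 2 * e) = 1 := by linear_combination 4 * hee
    have hF : (1 - 2 * f) * (1 - 2 * f) = 1 := by linear_combination 4 * hff
    have A0 : ∀ x, (fun x => (1 - 2 * e) * x + 0) x = (1 - 2 * e) * x + 0 := fun _ => rfl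
    have A1 : ∀ x, (fun x => 1 * x + e) x = 1 * x + e := fun _ => rfl
    have B0 : ∀ x, (fun x => (1 - 2 * f) * x + 0) x = (1 - 2 * f) * x + 0 := fun _ => rfl
    have B1 : ∀ x, (fun x => 1 * x + f) x = 1 * x + f := fun _ => rfl
    refine ⟨_, _, _, _, ⟨⟨_, _, hE, hE⟩, 0, A0⟩, ⟨1, e, A1⟩, ⟨⟨_, _, hF, hF⟩, 0, B0⟩, ⟨1, f, B1⟩,
      ?_, ?_, ?_, ?_, ?_, ?_⟩
    · rw [aux_comm A0 B0]; ring
    · rw [aux_comm A0 B1]; linear_combination -2 * hef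
    · rw [aux_comm A1 B0]; linear_combination 2 * hef
    · rw [aux_comm A1 B1]; ring
    · rw [aux_comm A0 A1]
      intro h
      apply he
      linear_combination -h - 2 * hee
    · rw [aux_comm B0 B1]
      intro h
      apply hf
      linear_combination -h - 2 * hff
end
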